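/- arXiv:1406.0701 — 10 statements merged into one kernel-verified Lean document; each statement's English description precedes it below -/
import Mathlib

section
/- For every cardinal κ with 1 ≤ κ ≤ 2^ℵ₀ there exists a family of κ pairwise disjoint nonempty subsets of ℝ, each closed under addition, whose union is ℝ. -/
/-- `b` is the largest index at which the finitely supported function `v` is nonzero. -/
def IsLeadingIndex {B : Type*} [LinearOrder B] (v : B →₀ ℚ) (b : B) : Prop :=
  v b ≠ 0 ∧ ∀ c, b < c → v c = 0

namespace IsLeadingIndex

variable {B : Type*} [LinearOrder B] {v w : B →₀ ℚ} {b c : B}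

theorem exists_of_ne_zero (hv : v ≠ 0) : ∃ b, IsLeadingIndex v b := by
  have hs : v.support.Nonempty := Finsupp.support_nonempty_iff.2 hv
  refine ⟨v.support.max' hs, Finsupp.mem_support_iff.1 (v.support.max'_mem hs), fun c hc => ?_⟩
  by_contra h
  exact (v.support.le_max' c (Finsupp.mem_support_iff.2 h)).not_gt hc

theorem unique (hb : IsLeadingIndex v b) (hc : IsLeadingIndex v c) : b = c := by
  rcases lt_trichotomy b c with h | h | h
  · exact absurd (hb.2 c h) hc.1
  · exact h
  · exact absurd (hc.2 b h) hb.1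

theorem add_of_lt (hb : IsLeadingIndex v b) (hc : IsLeadingIndex w c) (h : c < b) :
    IsLeadingIndex (v + w) b :=
  ⟨by simpa [hc.2 b h] using hb.1, fun d hd => by simp [hb.2 d hd, hc.2 d (h.trans hd)]⟩

theorem add_of_eq (hb : IsLeadingIndex v b) (hc : IsLeadingIndex w b) (h : v b + w b ≠ 0) :
    IsLeadingIndex (v + w) b :=
  ⟨h, fun d hd => by simp [hb.2 d hd, hc.2 d hd]⟩

theorem single (b : B) : IsLeadingIndex (Finsupp.single b (1 : ℚ)) b :=
  ⟨by simp, fun _ hd => Finsupp.single_eq_of_ne hd.ne'⟩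

end IsLeadingIndex

open Classical in
/-- Colour a nonzero `v` with leading index `b` by `p b` if its leading coefficient is positive
and by `n b` otherwise; the zero function gets the colour `i₀`. -/
noncomputable def leadingColor {B ι : Type*} [LinearOrder B] (p n : B → ι) (i₀ : ι)
    (v : B →₀ ℚ) : ι :=
  if h : ∃ b, IsLeadingIndex v b then (if 0 < v h.choose then p h.choose else n h.choose) else i₀

section leadingColor

variable {B ι : Type*} [LinearOrder B] {p n : B → ι} {i₀ : ι} {v w : B →₀ ℚ} {b : B}

theorem leadingColor_eq (hb : IsLeadingIndex v b) :
    leadingColor p n i₀ v = if 0 < v b then p b else n b := by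
  have h : ∃ b, IsLeadingIndex v b := ⟨b, hb⟩
  rw [leadingColor, dif_pos h, h.choose_spec.unique hb]

theorem leadingColor_add_of_lt {c : B} (hb : IsLeadingIndex v b) (hc : IsLeadingIndex w c)
    (h : c < b) : leadingColor p n i₀ (v + w) = leadingColor p n i₀ v := by
  rw [leadingColor_eq (hb.add_of_lt hc h), leadingColor_eq hb, Finsupp.add_apply, hc.2 b h,
    add_zero]

theorem leadingColor_add_of_eq (hpn : ∀ b, p b ≠ n b) (hb : IsLeadingIndex v b)
    (hc : IsLeadingIndex w b) (h : leadingColor p n i₀ v = leadingColor p n i₀ w) :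
    leadingColor p n i₀ (v + w) = leadingColor p n i₀ v := by
  rw [leadingColor_eq hb, leadingColor_eq hc] at h
  rcases hb.1.lt_or_gt with hv | hv <;> rcases hc.1.lt_or_gt with hw | hw
  · have hs : v b + w b < 0 := add_neg hv hw
    rw [leadingColor_eq (hb.add_of_eq hc hs.ne), leadingColor_eq hb, Finsupp.add_apply,
      if_neg hs.not_gt, if_neg hv.not_gt]
  · rw [if_neg hv.not_gt, if_pos hw] at h
    exact absurd h.symm (hpn b)
  · rw [if_pos hv, if_neg hw.not_gt] at h
    exact absurd h (hpn b)
  · have hs : 0 < v b + w b := add_pos hv hw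
    rw [leadingColor_eq (hb.add_of_eq hc hs.ne'), leadingColor_eq hb, Finsupp.add_apply,
      if_pos hs, if_pos hv]

theorem leadingColor_add (hpn : ∀ b, p b ≠ n b)
    (h : leadingColor p n i₀ v = leadingColor p n i₀ w) :
    leadingColor p n i₀ (v + w) = leadingColor p n i₀ v := by
  rcases eq_or_ne v 0 with rfl | hv
  · rw [zero_add, h]
  rcases eq_or_ne w 0 with rfl | hw
  · rw [add_zero]
  obtain ⟨b, hb⟩ := IsLeadingIndex.exists_of_ne_zero hv
  obtain ⟨c, hc⟩ := IsLeadingIndex.exists_of_ne_zero hw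
  rcases lt_trichotomy b c with hbc | rfl | hbc
  · rw [add_comm, leadingColor_add_of_lt hc hb hbc, h]
  · exact leadingColor_add_of_eq hpn hb hc h
  · exact leadingColor_add_of_lt hb hc hbc

theorem leadingColor_surjective (hp : Function.Surjective p) :
    Function.Surjective (leadingColor p n i₀) := fun i => by
  obtain ⟨b, rfl⟩ := hp i
  exact ⟨Finsupp.single b 1, by simp [leadingColor_eq (IsLeadingIndex.single b)]⟩

end leadingColor

/-- If `ι` is nonempty and has at most continuum many elements, the reals can be coloured with all
colours of `ι` so that every colour class is closed under addition. -/
theorem exists_surjective_coloring_real {ι : Type} [Nonempty ι]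
    (hι : Cardinal.mk ι ≤ Cardinal.continuum) :
    ∃ f : ℝ → ι, Function.Surjective f ∧ ∀ x y, f x = f y → f (x + y) = f x := by
  rcases subsingleton_or_nontrivial ι with _ | _
  · exact ⟨fun _ => Classical.arbitrary ι, fun i => ⟨0, Subsingleton.elim _ _⟩, fun _ _ _ => rfl⟩
  let e := Module.Basis.ofVectorSpace ℚ ℝ
  have hB : Cardinal.mk (Module.Basis.ofVectorSpaceIndex ℚ ℝ) = Cardinal.continuum := by
    rw [e.mk_eq_rank'', Real.rank_rat_real]
  obtain ⟨g⟩ : Nonempty (ι ↪ Module.Basis.ofVectorSpaceIndex ℚ ℝ) := by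
    rwa [← Cardinal.le_def, hB]
  choose σ hσ using fun i : ι => exists_ne i
  let p := Function.invFun g
  refine ⟨fun x => leadingColor p (σ ∘ p) (Classical.arbitrary ι) (e.repr x),
    (leadingColor_surjective (Function.invFun_surjective g.injective)).comp e.repr.surjective,
    fun x y h => ?_⟩
  simp only [map_add]
  exact leadingColor_add (fun b => (hσ (p b)).symm) h

/-- For every cardinal κ with 1 ≤ κ ≤ 2^ℵ₀ there exists a family of κ pairwise disjoint
nonempty subsets of ℝ, each closed under addition, whose union is ℝ. -/
theorem stmt_0 (κ : Cardinal) (h1 : 1 ≤ κ) (h2 : κ ≤ 2 ^ Cardinal.aleph0) :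
    ∃ (ι : Type) (A : ι → Set ℝ),
      Cardinal.mk ι = κ ∧
      Pairwise (Function.onFun Disjoint A) ∧
      (∀ i, (A i).Nonempty) ∧
      (∀ i, ∀ x ∈ A i, ∀ y ∈ A i, x + y ∈ A i) ∧
      (⋃ i, A i) = Set.univ := by
  have : Nonempty κ.out := by
    rw [← Cardinal.mk_ne_zero_iff, Cardinal.mk_out]
    exact Cardinal.one_le_iff_ne_zero.1 h1
  obtain ⟨f, hf, hadd⟩ := exists_surjective_coloring_real (ι := κ.out)
    (by rwa [Cardinal.mk_out, ← Cardinal.two_power_aleph0])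
  refine ⟨κ.out, fun i => f ⁻¹' {i}, Cardinal.mk_out κ, fun i j hij => ?_, fun i => hf i, ?_, ?_⟩
  · exact Disjoint.preimage f (Set.disjoint_singleton.2 hij)
  · rintro i x rfl y hy
    exact hadd x y hy.symm
  · exact Set.eq_univ_of_forall fun x => Set.mem_iUnion.2 ⟨f x, rfl⟩
end

section
/- Let G be an infinite group and let S be a set of proper subgroups of G such that any two distinct members of S intersect exactly in the trivial subgroup {1}, and such that the union of the members of S is all of G. Then the cardinality of S equals the cardinality of G. -/
/-- Members of a family of pairwise essentially disjoint subgroups are determined by a suitable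
element, so there are at most `|G|` of them. -/
theorem Subgroup.mk_le_of_pairwise_inf_eq_bot {G : Type*} [Group G] (S : Set (Subgroup G))
    (hdisj : ∀ H ∈ S, ∀ K ∈ S, H ≠ K → H ⊓ K = (⊥ : Subgroup G)) :
    Cardinal.mk S ≤ Cardinal.mk G := by
  have hex : ∀ H : S, ∃ g ∈ H.1, g = 1 → H.1 = ⊥ := by
    intro H
    rcases H.1.bot_or_exists_ne_one with h | ⟨g, hg, hne⟩
    · exact ⟨1, H.1.one_mem, fun _ => h⟩
    · exact ⟨g, hg, fun h => absurd h hne⟩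
  choose e he he_one using hex
  refine Cardinal.mk_le_of_injective (f := e) fun H K hHK => ?_
  by_contra hne
  have hmem : e H ∈ H.1 ⊓ K.1 := ⟨he H, hHK ▸ he K⟩
  rw [hdisj H H.2 K K.2 fun h => hne (Subtype.ext h), Subgroup.mem_bot] at hmem
  exact hne (Subtype.ext ((he_one H hmem).trans (he_one K (hHK ▸ hmem)).symm))

/-- If `G` is covered by a family `S` of pairwise essentially disjoint proper subgroups, then
`|G| ≤ |S| * |S|`: an element `g` of `H ∈ S` is determined by `H` and the member of `S` containing
`x * g`, where `x ∉ H` is fixed. -/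
theorem Subgroup.mk_le_mul_self_of_cover {G : Type*} [Group G] (S : Set (Subgroup G))
    (hproper : ∀ H ∈ S, H ≠ (⊤ : Subgroup G))
    (hdisj : ∀ H ∈ S, ∀ K ∈ S, H ≠ K → H ⊓ K = (⊥ : Subgroup G))
    (hcover : ∀ g : G, ∃ H ∈ S, g ∈ H) :
    Cardinal.mk G ≤ Cardinal.mk S * Cardinal.mk S := by
  have hout : ∀ H : S, ∃ x, x ∉ H.1 := fun H => by
    by_contra! h
    exact hproper H H.2 ((Subgroup.eq_top_iff' _).2 h)
  have hcover' : ∀ g : G, ∃ H : S, g ∈ H.1 := fun g => by simpa using hcover g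
  choose x hx using hout
  choose f hf using hcover'
  rw [Cardinal.mul_def]
  refine Cardinal.mk_le_of_injective (f := fun g => (f g, f (x (f g) * g))) fun a b hab => ?_
  obtain ⟨hH, hK⟩ := Prod.mk.inj hab
  have hb : b ∈ (f a).1 := hH ▸ hf b
  have hxb : x (f a) * b ∈ (f (x (f a) * a)).1 := by
    rw [hK, hH]
    exact hf _
  have hne : (f a).1 ≠ (f (x (f a) * a)).1 := fun h =>
    hx (f a) (((f a).1.mul_mem_cancel_right (hf a)).1 (h ▸ hf (x (f a) * a)))
  have hmem : a⁻¹ * b ∈ (f a).1 ⊓ (f (x (f a) * a)).1 := by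
    refine Subgroup.mem_inf.2 ⟨mul_mem (inv_mem (hf a)) hb, ?_⟩
    have := mul_mem (inv_mem (hf (x (f a) * a))) hxb
    simpa [mul_assoc] using this
  rw [hdisj _ (f a).2 _ (f _).2 hne, Subgroup.mem_bot] at hmem
  exact inv_mul_eq_one.1 hmem

/-- If an infinite group `G` is the union of a family `S` of proper subgroups that pairwise
intersect exactly in the trivial subgroup, then `|S| = |G|`. -/
theorem stmt_1 {G : Type*} [Group G] [Infinite G] (S : Set (Subgroup G))
    (hproper : ∀ H ∈ S, H ≠ (⊤ : Subgroup G))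
    (hdisj : ∀ H ∈ S, ∀ K ∈ S, H ≠ K → H ⊓ K = (⊥ : Subgroup G))
    (hcover : ∀ g : G, ∃ H ∈ S, g ∈ H) :
    Cardinal.mk S = Cardinal.mk G := by
  have hle := Subgroup.mk_le_mul_self_of_cover S hproper hdisj hcover
  have hS : Cardinal.aleph0 ≤ Cardinal.mk S := by
    by_contra! h
    exact ((Cardinal.aleph0_le_mk G).trans hle).not_gt (Cardinal.mul_lt_aleph0 h h)
  rw [Cardinal.mul_eq_self hS] at hle
  exact (Subgroup.mk_le_of_pairwise_inf_eq_bot S hdisj).antisymm hle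
end

section
/- Suppose (B_i)_{i ∈ I} is a family of pairwise disjoint Borel subsets of ℝ whose union is the open halfline (0, ∞), and for each i ∈ I either B_i + B_i ⊆ B_i or B_i + B_i + B_i ⊆ B_i. Then either every B_i has Lebesgue measure zero and is meager, or there exists i₁ ∈ I with B_{i₁} = (0, ∞). -/
open Pointwise

open MeasureTheory Filter Topology

/-- **Piccard's theorem** for sumsets. -/
theorem interior_add_self_nonempty_of_not_isMeagre {G : Type*} [AddCommGroup G]
    [TopologicalSpace G] [IsTopologicalAddGroup G] [BaireSpace G] {E : Set G}
    (hE : BaireMeasurableSet E) (hmeagre : ¬ IsMeagre E) : (interior (E + E)).Nonempty := by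
  obtain ⟨u, hu, hEu⟩ := hE.residualEq_isOpen
  obtain ⟨x, hx⟩ : u.Nonempty := by
    rw [Set.nonempty_iff_ne_empty]
    rintro rfl
    refine hmeagre (hEu.mono fun y hy hyE => ?_)
    exact cast hy hyE
  refine ⟨x + x, mem_interior_iff_mem_nhds.2 ?_⟩
  have hnear : {s | s - x ∈ u} ∈ 𝓝 (x + x) :=
    (hu.preimage (continuous_id.sub continuous_const)).mem_nhds (by simpa using hx)
  filter_upwards [hnear] with s hs
  have hrefl : ∀ᶠ y in residual G, (s - y ∈ E) = (s - y ∈ u) :=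
    (tendsto_residual_of_isOpenMap (Homeomorph.subLeft s).continuous
      (Homeomorph.subLeft s).isOpenMap).eventually hEu
  have hopen : IsOpen (u ∩ {y | s - y ∈ u}) :=
    hu.inter (hu.preimage (continuous_const.sub continuous_id))
  obtain ⟨y, ⟨hyu, hsyu⟩, hy, hsy⟩ :=
    (dense_of_mem_residual (hEu.and hrefl)).inter_open_nonempty _ hopen ⟨x, hx, hs⟩
  exact Set.mem_add.2 ⟨y, cast hy.symm hyu, s - y, cast hsy.symm hsyu, add_sub_cancel y s⟩

/-- **Steinhaus' theorem** for sumsets. -/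
theorem interior_add_self_nonempty_of_volume_ne_zero {E : Set ℝ}
    (hE : MeasurableSet E) (hpos : volume E ≠ 0) : (interior (E + E)).Nonempty := by
  obtain ⟨t, ht⟩ : ∃ t : ℝ, volume (E ∩ {x | t - x ∈ E}) ≠ 0 := by
    by_contra! hnull
    have hmp := measurePreserving_prod_neg_add_swap (volume : Measure ℝ) (volume : Measure ℝ)
    have hEE : MeasurableSet (E ×ˢ E) := hE.prod hE
    have hzero := (Measure.measure_prod_null (μ := (volume : Measure ℝ))
      (ν := (volume : Measure ℝ)) (hmp.measurable hEE)).2 (Eventually.of_forall fun t => by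
        refine Eq.trans (congrArg volume ?_) (hnull t)
        ext x
        simp [neg_add_eq_sub])
    rw [hmp.measure_preimage hEE.nullMeasurableSet, Measure.prod_prod] at hzero
    simp_all
  have hF : MeasurableSet (E ∩ {x | t - x ∈ E}) :=
    hE.inter ((measurable_const.sub measurable_id) hE)
  have hnhds := Measure.sub_mem_nhds_zero_of_addHaar_pos volume _ hF (pos_iff_ne_zero.2 ht)
  refine ⟨t, mem_interior_iff_mem_nhds.2 ?_⟩
  have htend : Tendsto (fun s : ℝ => s - t) (𝓝 t) (𝓝 0) :=
    (continuous_sub_right t).tendsto' t 0 (sub_self t)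
  filter_upwards [htend hnhds] with s hs
  obtain ⟨x, hx, y, hy, hxy⟩ := Set.mem_sub.1 hs
  exact Set.mem_add.2 ⟨x, hx.1, t - y, hy.2, by linarith⟩

theorem odd_mul_mem_of_add_add_subset {S : Set ℝ} (hS : S + S + S ⊆ S) {x : ℝ} (hx : x ∈ S)
    (k : ℕ) : (2 * k + 1 : ℝ) * x ∈ S := by
  induction k with
  | zero => simpa using hx
  | succ k ih =>
    convert hS (Set.add_mem_add (Set.add_mem_add ih hx) hx) using 1
    push_cast
    ring

theorem exists_Ioi_subset_of_add_add_subset {S : Set ℝ} (hpos : S ⊆ Set.Ioi 0)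
    (hS : S + S + S ⊆ S) (hint : (interior S).Nonempty) : ∃ c, Set.Ioi c ⊆ S := by
  obtain ⟨a, ha⟩ := hint
  have ha0 : 0 < a := hpos (interior_subset ha)
  obtain ⟨l, b, ⟨hla, hab⟩, hsub⟩ :=
    mem_nhds_iff_exists_Ioo_subset.1 (mem_interior_iff_mem_nhds.1 ha)
  have hb0 : 0 < b := ha0.trans hab
  refine ⟨2 * a * b / (b - a), fun y hy => ?_⟩
  have hy' : 2 * a * b < y * (b - a) := (div_lt_iff₀ (sub_pos.2 hab)).1 hy
  have hy0 : 0 < y := (div_pos (by positivity) (sub_pos.2 hab)).trans hy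
  set z := y / b with hz
  have hyz : y = z * b := by rw [hz]; field_simp
  have hz0 : 0 < z := div_pos hy0 hb0
  set k := ⌊z / 2 + 1 / 2⌋₊
  have hk₁ : (k : ℝ) ≤ z / 2 + 1 / 2 := Nat.floor_le (by positivity)
  have hk₂ : z / 2 + 1 / 2 < k + 1 := Nat.lt_floor_add_one _
  have hk0 : (0 : ℝ) < 2 * k + 1 := by positivity
  have hza : (z + 2) * a < y := by
    rw [hyz] at hy' ⊢
    nlinarith
  have hmem : y / (2 * k + 1) ∈ S := by
    refine hsub ⟨hla.trans ?_, ?_⟩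
    · rw [lt_div_iff₀ hk0]
      nlinarith
    · rw [div_lt_iff₀ hk0]
      nlinarith
  convert odd_mul_mem_of_add_add_subset hS hmem k using 1
  field_simp

/-- If `(0, ∞)` is partitioned into Borel sets `B i`, each satisfying `B i + B i ⊆ B i` or
`B i + B i + B i ⊆ B i`, then either every `B i` is Lebesgue null and meager, or some
`B i₁ = (0, ∞)`. -/
theorem stmt_4 {ι : Type*} (B : ι → Set ℝ)
    (hmeas : ∀ i, MeasurableSet (B i))
    (hdisj : Pairwise (Function.onFun Disjoint B))
    (hcover : (⋃ i, B i) = Set.Ioi (0 : ℝ))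
    (hsg : ∀ i, B i + B i ⊆ B i ∨ B i + B i + B i ⊆ B i) :
    (∀ i, MeasureTheory.volume (B i) = 0 ∧ IsMeagre (B i)) ∨
      ∃ i₁, B i₁ = Set.Ioi (0 : ℝ) := by
  have hpos : ∀ i, B i ⊆ Set.Ioi 0 := fun i => hcover ▸ Set.subset_iUnion B i
  have htriple : ∀ i, B i + B i + B i ⊆ B i := fun i =>
    (hsg i).elim (fun h => (Set.add_subset_add_right h).trans h) id
  refine or_iff_not_imp_left.2 fun hnot => ?_
  obtain ⟨i, hi⟩ := not_forall.1 hnot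
  have hsum : (interior (B i + B i)).Nonempty := by
    rcases not_and_or.1 hi with h | h
    · exact interior_add_self_nonempty_of_volume_ne_zero (hmeas i) h
    · exact interior_add_self_nonempty_of_not_isMeagre (hmeas i).baireMeasurableSet h
  have hne : (B i).Nonempty := (hsum.mono interior_subset).of_add_left
  have hint : (interior (B i)).Nonempty :=
    (hsum.add hne).mono
      (interior_maximal ((Set.add_subset_add_right interior_subset).trans (htriple i))
        isOpen_interior.add_right)
  obtain ⟨c, hc⟩ := exists_Ioi_subset_of_add_add_subset (hpos i) (htriple i) hint
  refine ⟨i, (hpos i).antisymm fun x hx => ?_⟩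
  obtain ⟨j, hj⟩ := Set.mem_iUnion.1 (hcover ▸ hx)
  have hx0 : 0 < x := hx
  obtain ⟨n, hn⟩ := exists_nat_gt (c / x)
  rw [div_lt_iff₀ hx0] at hn
  have hlarge : c < (2 * n + 1 : ℝ) * x := by nlinarith [n.cast_nonneg (α := ℝ)]
  have hij : j = i := by
    by_contra hji
    exact Set.disjoint_left.1 (hdisj hji) (odd_mul_mem_of_add_add_subset (htriple j) hj n)
      (hc hlarge)
  exact hij ▸ hj
end

section
/- Suppose (M_i)_{i ∈ I} is a family of pairwise disjoint Borel subsets of ℝ whose union is ℝ, and each M_i is closed under multiplication. Then every M_i either has Lebesgue measure zero and is meager, or is the union of some subfamily of the four sets (-1, 0) ∪ (0, 1), (-∞, -1) ∪ (1, ∞), {-1, 1}, and {0}. -/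
open MeasureTheory Set Topology Filter

/-- A set of reals of positive Lebesgue measure has a sumset with nonempty interior. -/
theorem exists_isOpen_subset_add_of_volume_ne_zero {A : Set ℝ} (hA : MeasurableSet A)
    (hpos : volume A ≠ 0) :
    ∃ U : Set ℝ, IsOpen U ∧ U.Nonempty ∧ ∀ z ∈ U, ∃ a ∈ A, ∃ b ∈ A, a + b = z := by
  obtain ⟨a, ha⟩ : ∃ a, Tendsto (fun r => volume (A ∩ Metric.closedBall a r) /
      volume (Metric.closedBall a r)) (𝓝[>] 0) (𝓝 1) := by
    have : (ae (volume.restrict A)).NeBot := by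
      rw [ae_neBot]
      exact fun h => hpos (Measure.restrict_eq_zero.1 h)
    exact (Besicovitch.ae_tendsto_measure_inter_div volume A).exists
  have h34 : ENNReal.ofReal (3 / 4) < 1 := by
    rw [← ENNReal.ofReal_one]
    exact (ENNReal.ofReal_lt_ofReal_iff one_pos).2 (by norm_num)
  obtain ⟨r, hr, hr0⟩ := ((ha.eventually (lt_mem_nhds h34)).and self_mem_nhdsWithin).exists
  have hr0 : 0 < r := hr0
  set B := A ∩ Metric.closedBall a r
  have hBm : MeasurableSet B := hA.inter Metric.isClosed_closedBall.measurableSet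
  have hvol : ENNReal.ofReal (3 / 2 * r) < volume B := by
    rw [Real.volume_closedBall, ENNReal.lt_div_iff_mul_lt (by simp [hr0]) (by simp),
      ← ENNReal.ofReal_mul (by norm_num)] at hr
    convert hr using 2
    ring
  refine ⟨Metric.ball (2 * a) (r / 2), Metric.isOpen_ball,
    ⟨2 * a, Metric.mem_ball_self (by positivity)⟩, fun z hz => ?_⟩
  rw [Metric.mem_ball, Real.dist_eq, abs_lt] at hz
  have hpre : volume ((fun x => z - x) ⁻¹' B) = volume B :=
    (Measure.measurePreserving_sub_left volume z).measure_preimage hBm.nullMeasurableSet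
  have hne : (B ∩ (fun x => z - x) ⁻¹' B).Nonempty := by
    refine nonempty_inter_of_measure_lt_add volume
      (u := Metric.closedBall a (3 / 2 * r)) (hBm.preimage (by fun_prop)) ?_ ?_ ?_
    · exact inter_subset_right.trans (Metric.closedBall_subset_closedBall (by linarith))
    · intro x hx
      have := hx.2
      rw [Metric.mem_closedBall, Real.dist_eq, abs_le] at this ⊢
      constructor <;> linarith [this.1, this.2]
    · rw [hpre, Real.volume_closedBall]
      calc ENNReal.ofReal (2 * (3 / 2 * r))
          = ENNReal.ofReal (3 / 2 * r) + ENNReal.ofReal (3 / 2 * r) := by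
            rw [← ENNReal.ofReal_add (by positivity) (by positivity)]
            ring_nf
        _ < volume B + volume B := ENNReal.add_lt_add hvol hvol
  obtain ⟨x, hx, hx'⟩ := hne
  exact ⟨x, hx.1, z - x, hx'.1, by ring⟩

/-- A nonmeager Borel set of reals has a sumset with nonempty interior. -/
theorem exists_isOpen_subset_add_of_not_isMeagre {A : Set ℝ} (hA : MeasurableSet A)
    (hmeagre : ¬ IsMeagre A) :
    ∃ U : Set ℝ, IsOpen U ∧ U.Nonempty ∧ ∀ z ∈ U, ∃ a ∈ A, ∃ b ∈ A, a + b = z := by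
  obtain ⟨V, hV, hAV⟩ := hA.residualEq_isOpen
  have hVne : V.Nonempty := by
    rw [nonempty_iff_ne_empty]
    rintro rfl
    exact hmeagre (by filter_upwards [hAV.mem_iff] with x hx using fun h => hx.1 h)
  obtain ⟨c, hc⟩ := hVne
  refine ⟨(fun z => z - c) ⁻¹' V, hV.preimage (by fun_prop), ⟨c + c, by simpa using hc⟩,
    fun z hz => ?_⟩
  have hrefl : ∀ᶠ x in residual ℝ, z - x ∈ A ↔ z - x ∈ V :=
    (tendsto_residual_of_isOpenMap (Homeomorph.subLeft z).continuous
      (Homeomorph.subLeft z).isOpenMap).eventually hAV.mem_iff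
  have hdense := dense_of_mem_residual (hAV.mem_iff.and hrefl)
  obtain ⟨x, ⟨hxV, hxV'⟩, hx, hx'⟩ := hdense.inter_open_nonempty
    (V ∩ (fun x => z - x) ⁻¹' V) (hV.inter (hV.preimage (by fun_prop))) ⟨c, hc, hz⟩
  exact ⟨x, hx.2 hxV, z - x, hx'.2 hxV', by ring⟩

theorem natCast_mul_mem_of_add_mem {S : Set ℝ} (hadd : ∀ x ∈ S, ∀ y ∈ S, x + y ∈ S)
    {x : ℝ} (hx : x ∈ S) : ∀ n : ℕ, 0 < n → (n : ℝ) * x ∈ S := by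
  intro n hn
  induction n, hn using Nat.le_induction with
  | base => simpa using hx
  | succ n _ ih =>
    have := hadd _ ih _ hx
    push_cast
    rwa [add_mul, one_mul]

/-- An additive semigroup of reals that is closed under division by positive integers and has
nonempty interior contains all positive reals as soon as it contains one. -/
theorem Ioi_subset_of_add_mem {S U : Set ℝ} (hadd : ∀ x ∈ S, ∀ y ∈ S, x + y ∈ S)
    (hdiv : ∀ x : ℝ, ∀ n : ℕ, 0 < n → (n : ℝ) * x ∈ S → x ∈ S)
    (hU : IsOpen U) (hUne : U.Nonempty) (hUS : U ⊆ S)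
    {x : ℝ} (hx : x ∈ S) (hx0 : 0 < x) : Ioi 0 ⊆ S := by
  obtain ⟨u, hu⟩ := hUne
  obtain ⟨ε, hε, hball⟩ := Metric.isOpen_iff.1 hU u hu
  obtain ⟨n, hn⟩ := exists_nat_gt (max 0 (-u / x))
  have hn0 : 0 < n := by exact_mod_cast (le_max_left _ _).trans_lt hn
  have hw : 0 < n * x + u := by
    have := (div_lt_iff₀ hx0).1 ((le_max_right _ _).trans_lt hn)
    linarith
  intro y hy
  have hy : 0 < y := hy
  obtain ⟨q, hq1, hq2⟩ := exists_rat_btwn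
    (show (n * x + u) / y < (n * x + u + ε) / y from
      div_lt_div_of_pos_right (by linarith) hy)
  have hqpos : 0 < q := by exact_mod_cast (div_pos hw hy).trans hq1
  rw [div_lt_iff₀ hy] at hq1
  rw [lt_div_iff₀ hy] at hq2
  have hqy : (q : ℝ) * y ∈ S := by
    have hmem : (q : ℝ) * y - n * x ∈ S := hUS <| hball <| by
      rw [Metric.mem_ball, Real.dist_eq, abs_lt]
      constructor <;> linarith
    simpa using hadd _ hmem _ (natCast_mul_mem_of_add_mem hadd hx n hn0)
  have hnum : 0 < q.num := Rat.num_pos.2 hqpos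
  refine hdiv y q.num.toNat (by omega) ?_
  have hcast : ((q.num.toNat : ℕ) : ℝ) = q.den * q := by
    have h1 : ((q.num.toNat : ℕ) : ℝ) = ((q.num : ℤ) : ℝ) := by
      exact_mod_cast Int.toNat_of_nonneg hnum.le
    rw [h1]
    exact_mod_cast (Rat.den_mul_eq_num q).symm
  rw [hcast, mul_assoc]
  exact natCast_mul_mem_of_add_mem hadd hqy _ q.den_pos

theorem Iio_subset_of_add_mem {S U : Set ℝ} (hadd : ∀ x ∈ S, ∀ y ∈ S, x + y ∈ S)
    (hdiv : ∀ x : ℝ, ∀ n : ℕ, 0 < n → (n : ℝ) * x ∈ S → x ∈ S)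
    (hU : IsOpen U) (hUne : U.Nonempty) (hUS : U ⊆ S)
    {x : ℝ} (hx : x ∈ S) (hx0 : x < 0) : Iio 0 ⊆ S := by
  obtain ⟨u, hu⟩ := hUne
  have key : Ioi 0 ⊆ (fun x => -x) ⁻¹' S := by
    refine Ioi_subset_of_add_mem (U := (fun x => -x) ⁻¹' U) (x := -x) ?_ ?_
      (hU.preimage continuous_neg) ⟨-u, by simpa using hu⟩ (preimage_mono hUS)
      (by simpa using hx) (by linarith)
    · intro a ha b hb
      simpa [add_comm] using hadd _ ha _ hb
    · intro a n hn ha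
      exact hdiv (-a) n hn (by simpa using ha)
  intro y hy
  simpa using key (show -y ∈ Ioi 0 by simpa using hy)

/-- A symmetric set of reals whose logarithmic preimage is null is null. -/
theorem volume_eq_zero_of_exp_preimage {A : Set ℝ} (hneg : ∀ x ∈ A, -x ∈ A)
    (h : volume (Real.exp ⁻¹' A) = 0) : volume A = 0 := by
  have himg : volume (Real.exp '' (Real.exp ⁻¹' A)) = 0 :=
    addHaar_image_eq_zero_of_differentiableOn_of_addHaar_eq_zero volume
      Real.differentiable_exp.differentiableOn h
  have himg' : volume ((fun x => -x) ⁻¹' (Real.exp '' (Real.exp ⁻¹' A))) = 0 :=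
    (Measure.measurePreserving_neg volume).quasiMeasurePreserving.preimage_null himg
  refine measure_mono_null ?_ (measure_union_null (measure_union_null himg himg')
    (measure_singleton (0 : ℝ)))
  intro x hx
  rcases lt_trichotomy x 0 with h0 | h0 | h0
  · refine Or.inl (Or.inr ⟨Real.log (-x), ?_, Real.exp_log (by linarith)⟩)
    rw [mem_preimage, Real.exp_log (by linarith)]
    exact hneg x hx
  · exact Or.inr h0
  · refine Or.inl (Or.inl ⟨Real.log x, ?_, Real.exp_log h0⟩)
    rwa [mem_preimage, Real.exp_log h0]

/-- A symmetric set of reals whose logarithmic preimage is meager is meager. -/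
theorem isMeagre_of_exp_preimage {A : Set ℝ} (hneg : ∀ x ∈ A, -x ∈ A)
    (h : IsMeagre (Real.exp ⁻¹' A)) : IsMeagre A := by
  let e : Ioi (0 : ℝ) ≃ₜ ℝ := Real.expOrderIso.toHomeomorph.symm
  have he : ∀ x : Ioi (0 : ℝ), Real.exp (e x) = x := fun x =>
    congrArg Subtype.val (Real.expOrderIso.apply_symm_apply x)
  have himg : IsMeagre (Subtype.val '' (e ⁻¹' (Real.exp ⁻¹' A))) :=
    (h.preimage_of_isOpenMap e.continuous e.isOpenMap).image_val
  have himg' := himg.preimage_of_isOpenMap (Homeomorph.neg ℝ).continuous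
    (Homeomorph.neg ℝ).isOpenMap
  have hzero : IsMeagre ({0} : Set ℝ) := by
    apply IsNowhereDense.isMeagre
    simp [IsNowhereDense]
  refine ((himg.union himg').union hzero).mono ?_
  have hmem : ∀ x ∈ A, 0 < x → x ∈ Subtype.val '' (e ⁻¹' (Real.exp ⁻¹' A)) := by
    intro x hx h0
    refine ⟨⟨x, h0⟩, ?_, rfl⟩
    rw [mem_preimage, mem_preimage, he]
    exact hx
  intro x hx
  rcases lt_trichotomy x 0 with h0 | h0 | h0
  · exact Or.inl (Or.inr (hmem (-x) (hneg x hx) (by linarith)))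
  · exact Or.inr h0
  · exact Or.inl (Or.inl (hmem x hx h0))

/-- If `ℝ` is partitioned into Borel sets `M i`, each closed under multiplication, then every
`M i` either is Lebesgue null and meager, or is the union of some subfamily of the four sets
`(-1,0) ∪ (0,1)`, `(-∞,-1) ∪ (1,∞)`, `{-1, 1}`, `{0}`. -/
theorem stmt_7 {ι : Type*} (M : ι → Set ℝ)
    (hmeas : ∀ i, MeasurableSet (M i))
    (hdisj : Pairwise (Function.onFun Disjoint M))
    (hcover : (⋃ i, M i) = Set.univ)
    (hmul : ∀ i, ∀ x ∈ M i, ∀ y ∈ M i, x * y ∈ M i) :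
    ∀ i, (MeasureTheory.volume (M i) = 0 ∧ IsMeagre (M i)) ∨
      ∃ S : Set (Set ℝ),
        S ⊆ {Set.Ioo (-1 : ℝ) 0 ∪ Set.Ioo (0 : ℝ) 1,
             Set.Iio (-1 : ℝ) ∪ Set.Ioi (1 : ℝ),
             {(-1 : ℝ), 1}, {(0 : ℝ)}} ∧
        M i = ⋃₀ S := by
  intro i
  have hclass : ∀ {x y : ℝ}, (∀ j, x ∈ M j → y ∈ M j) → y ∈ M i → x ∈ M i := by
    intro x y hxy hy
    obtain ⟨j, hj⟩ := mem_iUnion.1 (hcover ▸ mem_univ x)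
    by_cases hij : j = i
    · exact hij ▸ hj
    · exact absurd hy (disjoint_left.1 (hdisj hij) (hxy j hj))
  have hneg : ∀ x ∈ M i, -x ∈ M i := by
    intro x hx
    refine hclass (y := x * x) (fun j hj => ?_) (hmul i x hx x hx)
    simpa using hmul j _ hj _ hj
  have hadd : ∀ j, ∀ x ∈ Real.exp ⁻¹' M j, ∀ y ∈ Real.exp ⁻¹' M j,
      x + y ∈ Real.exp ⁻¹' M j := by
    intro j x hx y hy
    rw [mem_preimage, Real.exp_add]
    exact hmul j _ hx _ hy
  have hdiv : ∀ x : ℝ, ∀ n : ℕ, 0 < n → (n : ℝ) * x ∈ Real.exp ⁻¹' M i →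
      x ∈ Real.exp ⁻¹' M i := fun x n hn hx =>
    hclass (fun j hj => natCast_mul_mem_of_add_mem (hadd j) hj n hn) hx
  by_cases hU : ∃ U : Set ℝ, IsOpen U ∧ U.Nonempty ∧ U ⊆ Real.exp ⁻¹' M i
  · obtain ⟨U, hUo, hUne, hUS⟩ := hU
    have habs : ∀ {x : ℝ}, |x| ∈ M i ↔ x ∈ M i := by
      intro x
      rcases abs_choice x with h | h <;> rw [h]
      exact ⟨fun h => by simpa using hneg _ h, hneg x⟩
    have hlog : ∀ {x : ℝ}, x ≠ 0 → (Real.log x ∈ Real.exp ⁻¹' M i ↔ x ∈ M i) := by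
      intro x hx
      rw [mem_preimage, Real.exp_log_eq_abs hx, habs]
    refine Or.inr ⟨_, sep_subset _ (· ⊆ M i), subset_antisymm ?_ (sUnion_subset fun T hT => hT.2)⟩
    intro x hx
    rcases eq_or_ne x 0 with rfl | hx0
    · exact ⟨{0}, ⟨by simp, by simpa using hx⟩, rfl⟩
    have habspos := abs_pos.2 hx0
    rcases lt_trichotomy |x| 1 with h1 | h1 | h1
    · have hneglog : ∀ {y : ℝ}, y ≠ 0 → |y| < 1 → Real.log y < 0 := fun {y} hy hy1 => by
        rw [← Real.log_abs]
        exact Real.log_neg (abs_pos.2 hy) hy1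
      have hsub := Iio_subset_of_add_mem (hadd i) hdiv hUo hUne hUS ((hlog hx0).2 hx)
        (hneglog hx0 h1)
      have hmem : ∀ {y : ℝ}, y ∈ Ioo (-1 : ℝ) 0 ∪ Ioo (0 : ℝ) 1 ↔ y ≠ 0 ∧ |y| < 1 := by
        intro y
        rw [abs_lt]
        simp only [mem_union, mem_Ioo]
        grind
      refine ⟨_, ⟨Or.inl rfl, fun y hy => ?_⟩, hmem.2 ⟨hx0, h1⟩⟩
      obtain ⟨hy0, hy1⟩ := hmem.1 hy
      exact (hlog hy0).1 (hsub (hneglog hy0 hy1))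
    · have h1M : (1 : ℝ) ∈ M i := h1 ▸ habs.2 hx
      refine ⟨{-1, 1}, ⟨by simp, ?_⟩, ?_⟩
      · rintro y (rfl | rfl)
        exacts [hneg 1 h1M, h1M]
      · rcases eq_or_eq_neg_of_abs_eq h1 with h | h <;> simp [h]
    · have hposlog : ∀ {y : ℝ}, 1 < |y| → 0 < Real.log y := fun {y} hy1 => by
        rw [← Real.log_abs]
        exact Real.log_pos hy1
      have hsub := Ioi_subset_of_add_mem (hadd i) hdiv hUo hUne hUS ((hlog hx0).2 hx)
        (hposlog h1)
      have hmem : ∀ {y : ℝ}, y ∈ Iio (-1 : ℝ) ∪ Ioi (1 : ℝ) ↔ 1 < |y| := by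
        intro y
        rw [lt_abs]
        simp only [mem_union, mem_Iio, mem_Ioi]
        grind
      refine ⟨_, ⟨Or.inr (Or.inl rfl), fun y hy => ?_⟩, hmem.2 h1⟩
      have hy1 := hmem.1 hy
      exact (hlog (abs_pos.1 (one_pos.trans hy1))).1 (hsub (hposlog hy1))
  · have hmeasS : MeasurableSet (Real.exp ⁻¹' M i) := Real.measurable_exp (hmeas i)
    have hno : ¬ ∃ U : Set ℝ, IsOpen U ∧ U.Nonempty ∧
        ∀ z ∈ U, ∃ a ∈ Real.exp ⁻¹' M i, ∃ b ∈ Real.exp ⁻¹' M i, a + b = z := by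
      rintro ⟨U, hUo, hUne, hUS⟩
      refine hU ⟨U, hUo, hUne, fun z hz => ?_⟩
      obtain ⟨a, ha, b, hb, rfl⟩ := hUS z hz
      exact hadd i a ha b hb
    refine Or.inl ⟨volume_eq_zero_of_exp_preimage hneg ?_, isMeagre_of_exp_preimage hneg ?_⟩
    · by_contra h
      exact hno (exists_isOpen_subset_add_of_volume_ne_zero hmeasS h)
    · by_contra h
      exact hno (exists_isOpen_subset_add_of_not_isMeagre hmeasS h)
end

section
/- Suppose there exists a Hamel basis H of ℝ (a basis of ℝ as a vector space over ℚ) which can be written as the union of ℵ₁ pairwise disjoint subsets of ℝ each homeomorphic to the Cantor space. Then there exists a family of ℵ₁ pairwise disjoint nonempty F_σ subsets of ℝ, each closed under addition, whose union is ℝ. -/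
/-- An `F_σ` subset of `ℝ`: a countable union of closed sets. -/
def IsFsigma (A : Set ℝ) : Prop :=
  ∃ F : ℕ → Set ℝ, (∀ n, IsClosed (F n)) ∧ A = ⋃ n, F n

open scoped Pointwise

section SigmaCompact

variable {M : Type*} [TopologicalSpace M]

theorem IsSigmaCompact.union {s t : Set M} (hs : IsSigmaCompact s) (ht : IsSigmaCompact t) :
    IsSigmaCompact (s ∪ t) := by
  rw [Set.union_eq_iUnion]
  exact isSigmaCompact_iUnion _ (by rintro (_ | _) <;> assumption)

theorem IsSigmaCompact.add [Add M] [ContinuousAdd M] {s t : Set M}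
    (hs : IsSigmaCompact s) (ht : IsSigmaCompact t) : IsSigmaCompact (s + t) := by
  obtain ⟨K, hK, rfl⟩ := hs
  obtain ⟨L, hL, rfl⟩ := ht
  simp_rw [Set.iUnion_add, Set.add_iUnion]
  exact isSigmaCompact_iUnion _ fun m ↦
    isSigmaCompact_iUnion_of_isCompact _ fun n ↦ (hK m).add (hL n)

theorem IsSigmaCompact.nsmul [AddMonoid M] [ContinuousAdd M] {s : Set M}
    (hs : IsSigmaCompact s) (n : ℕ) : IsSigmaCompact (n • s) := by
  induction n with
  | zero => rw [zero_nsmul]; exact isCompact_singleton.isSigmaCompact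
  | succ n ih => rw [succ_nsmul]; exact ih.add hs

/-- Over a countable scalar ring, the span of a σ-compact set is σ-compact. -/
theorem IsSigmaCompact.span {K : Type*} [Semiring K] [Countable K] [AddCommMonoid M]
    [ContinuousAdd M] [Module K M] [ContinuousConstSMul K M] {s : Set M}
    (hs : IsSigmaCompact s) : IsSigmaCompact (Submodule.span K s : Set M) := by
  have hT : IsSigmaCompact (⋃ q : K, q • s) :=
    isSigmaCompact_iUnion _ fun q ↦ hs.image (continuous_const_smul q)
  suffices (Submodule.span K s : Set M) = ⋃ n : ℕ, n • ⋃ q : K, q • s by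
    rw [this]
    exact isSigmaCompact_iUnion _ hT.nsmul
  apply Set.Subset.antisymm
  · intro x hx
    rw [Set.mem_iUnion]
    rw [SetLike.mem_coe, ← Submodule.mem_toAddSubmonoid, Submodule.span_eq_closure] at hx
    induction hx using AddSubmonoid.closure_induction_left with
    | zero => exact ⟨0, by simp⟩
    | add_left x hx y _ ih =>
      obtain ⟨n, hn⟩ := ih
      obtain ⟨q, -, z, hz, rfl⟩ := hx
      refine ⟨n + 1, ?_⟩
      rw [succ_nsmul']
      exact Set.add_mem_add (Set.mem_iUnion.2 ⟨q, Set.smul_mem_smul_set hz⟩) hn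
  · refine Set.iUnion_subset fun n ↦ ?_
    induction n with
    | zero => simp
    | succ n ih =>
      rw [succ_nsmul]
      rintro _ ⟨x, hx, y, hy, rfl⟩
      refine add_mem (ih hx) ?_
      obtain ⟨q, z, hz, rfl⟩ := Set.mem_iUnion.1 hy
      exact Submodule.smul_mem _ _ (Submodule.subset_span hz)

end SigmaCompact

theorem IsSigmaCompact.isFsigma {A : Set ℝ} (hA : IsSigmaCompact A) : IsFsigma A := by
  obtain ⟨K, hK, rfl⟩ := hA
  exact ⟨K, fun n ↦ (hK n).isClosed, rfl⟩

namespace Module.Basis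

section LeadingSet

variable {K E κ : Type*} [Semiring K] [AddCommMonoid E] [Module K E] [LinearOrder κ]
  (b : Basis κ K E)

/-- The vectors whose coordinates vanish beyond some basis index in `S`, and whose coordinate at
that index lies in `Q`. -/
def leadingSet (S : Set κ) (Q : Set K) : Set E :=
  {x | ∃ h ∈ S, b.repr x h ∈ Q ∧ ∀ g, b.repr x g ≠ 0 → g ≤ h}

variable {b}

theorem add_mem_leadingSet {S : Set κ} {Q : Set K} (hQ : ∀ p ∈ Q, ∀ q ∈ Q, p + q ∈ Q)
    {x y : E} (hx : x ∈ b.leadingSet S Q) (hy : y ∈ b.leadingSet S Q) :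
    x + y ∈ b.leadingSet S Q := by
  obtain ⟨h, hS, hQx, hx⟩ := hx
  obtain ⟨h', hS', hQy, hy⟩ := hy
  have aux : ∀ g, b.repr (x + y) g ≠ 0 → g ≤ h ∨ g ≤ h' := by
    intro g hg
    by_contra! hlt
    have h1 : b.repr x g = 0 := by_contra fun h0 ↦ (hx g h0).not_gt hlt.1
    have h2 : b.repr y g = 0 := by_contra fun h0 ↦ (hy g h0).not_gt hlt.2
    simp [h1, h2] at hg
  rcases lt_trichotomy h h' with hlt | rfl | hlt
  · have h0 : b.repr x h' = 0 := by_contra fun h0 ↦ (hx h' h0).not_gt hlt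
    exact ⟨h', hS', by simpa [h0] using hQy, fun g hg ↦ (aux g hg).elim (·.trans hlt.le) id⟩
  · exact ⟨h, hS, by simpa using hQ _ hQx _ hQy, fun g hg ↦ (aux g hg).elim id id⟩
  · have h0 : b.repr y h = 0 := by_contra fun h0 ↦ (hy h h0).not_gt hlt
    exact ⟨h, hS, by simpa [h0] using hQx, fun g hg ↦ (aux g hg).elim id (·.trans hlt.le)⟩

theorem exists_mem_inter_of_mem_leadingSet {S S' : Set κ} {Q Q' : Set K} (hQ : (0 : K) ∉ Q)
    (hQ' : (0 : K) ∉ Q') {x : E} (hx : x ∈ b.leadingSet S Q) (hx' : x ∈ b.leadingSet S' Q') :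
    (S ∩ S').Nonempty ∧ (Q ∩ Q').Nonempty := by
  obtain ⟨h, hS, hQx, hx⟩ := hx
  obtain ⟨h', hS', hQx', hx'⟩ := hx'
  obtain rfl : h = h' := le_antisymm
    (hx' h fun h0 ↦ hQ (h0 ▸ hQx)) (hx h' fun h0 ↦ hQ' (h0 ▸ hQx'))
  exact ⟨⟨h, hS, hS'⟩, ⟨_, hQx, hQx'⟩⟩

theorem zero_notMem_leadingSet {S : Set κ} {Q : Set K} (hQ : (0 : K) ∉ Q) :
    (0 : E) ∉ b.leadingSet S Q := by
  rintro ⟨h, -, h0, -⟩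
  exact hQ (by simpa using h0)

theorem leadingSet_nonempty {S : Set κ} {Q : Set K} (hS : S.Nonempty) (hQ : Q.Nonempty) :
    (b.leadingSet S Q).Nonempty := by
  obtain ⟨h, hS⟩ := hS
  obtain ⟨q, hq⟩ := hQ
  refine ⟨q • b h, h, hS, by simpa using hq, fun g hg ↦ ?_⟩
  by_contra! hlt
  simp [hlt.ne] at hg

theorem exists_leading_index {x : E} (hx : x ≠ 0) :
    ∃ h, b.repr x h ≠ 0 ∧ ∀ g, b.repr x g ≠ 0 → g ≤ h := by
  have hne : (b.repr x).support.Nonempty := by simpa using hx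
  obtain ⟨h, hh, hmax⟩ := Finset.exists_max_image _ id hne
  exact ⟨h, by simpa using hh, fun g hg ↦ hmax g (by simpa using hg)⟩

end LeadingSet

section Real

variable {ι κ : Type*} [LinearOrder ι] [LinearOrder κ] (b : Basis κ ℚ ℝ) (idx : κ → ι)

theorem leadingSet_eq_iUnion
    (hlt : ∀ g h, g < h ↔ idx g < idx h ∨ idx g = idx h ∧ b g < b h) (i : ι) (Q : Set ℚ) :
    b.leadingSet (idx ⁻¹' {i}) Q =
      ⋃ (q : Q) (p : {p : ℚ × ℚ // p.1 < p.2}),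
        (q : ℚ) • (b '' (idx ⁻¹' {i}) ∩ Set.Ici (p.1.2 : ℝ)) +
          (Submodule.span ℚ ((⋃ j ∈ Set.Iio i, b '' (idx ⁻¹' {j})) ∪
            (b '' (idx ⁻¹' {i}) ∩ Set.Iic (p.1.1 : ℝ))) : Set ℝ) := by
  have himage : ∀ r : ℝ, (⋃ j ∈ Set.Iio i, b '' (idx ⁻¹' {j})) ∪
      (b '' (idx ⁻¹' {i}) ∩ Set.Iic r) = b '' {g | idx g < i ∨ idx g = i ∧ b g ≤ r} := by
    intro r
    ext x
    simp only [Set.mem_union, Set.mem_iUnion, Set.mem_image, Set.mem_inter_iff, Set.mem_preimage,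
      Set.mem_singleton_iff, Set.mem_Iio, Set.mem_Iic, Set.mem_ofPred_eq]
    constructor
    · rintro (⟨_, hj, g, rfl, rfl⟩ | ⟨⟨g, rfl, rfl⟩, hr⟩)
      · exact ⟨g, .inl hj, rfl⟩
      · exact ⟨g, .inr ⟨rfl, hr⟩, rfl⟩
    · rintro ⟨g, hj | ⟨rfl, hr⟩, rfl⟩
      · exact .inl ⟨_, hj, g, rfl, rfl⟩
      · exact .inr ⟨⟨g, rfl, rfl⟩, hr⟩
  simp_rw [himage]
  ext x
  simp only [Set.mem_iUnion, Subtype.exists, Prod.exists, Set.mem_add, SetLike.mem_coe,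
    mem_span_image]
  constructor
  · rintro ⟨h, rfl, hQ, hx⟩
    obtain ⟨m, hm, hmh⟩ := Order.exists_between_finsets
      (((b.repr x).support.image b).filter (· < b h)) {b h} (by simp)
    obtain ⟨r, hmr, hrh⟩ := exists_rat_btwn (hmh _ (Finset.mem_singleton_self _))
    obtain ⟨s, hrs, hsh⟩ := exists_rat_btwn hrh
    refine ⟨_, hQ, r, s, by exact_mod_cast hrs, b.repr x h • b h,
      Set.smul_mem_smul_set ⟨⟨h, rfl, rfl⟩, hsh.le⟩, x - b.repr x h • b h, ?_, by simp⟩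
    intro g hg
    have hgh : g ≠ h := by
      rintro rfl
      simp at hg
    have hg0 : b.repr x g ≠ 0 := by simpa [hgh.symm] using hg
    rcases (hlt g h).1 ((hx g hg0).lt_of_ne hgh) with h1 | ⟨h1, h2⟩
    · exact .inl h1
    · refine .inr ⟨h1, (hm _ ?_).le.trans hmr.le⟩
      exact Finset.mem_filter.2 ⟨Finset.mem_image_of_mem _ (by simpa using hg0), h2⟩
  · rintro ⟨q, hQ, r, s, hrs, _, ⟨_, ⟨⟨h, rfl, rfl⟩, hsh⟩, rfl⟩, v, hv, rfl⟩
    have hv' : ∀ g, b.repr v g ≠ 0 → g < h := by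
      intro g hg
      refine (hlt g h).2 ((hv (by simpa using hg)).imp_right fun ⟨h1, h2⟩ ↦ ⟨h1, ?_⟩)
      exact h2.trans_lt ((Rat.cast_lt.2 hrs).trans_le hsh)
    have h0 : b.repr v h = 0 := by_contra fun h0 ↦ (hv' h h0).false
    refine ⟨h, rfl, by simpa [h0] using hQ, fun g hg ↦ ?_⟩
    by_contra! hgh
    have h1 : b.repr v g = 0 := by_contra fun h1 ↦ (hv' g h1).not_gt hgh
    simp [h1, hgh.ne] at hg

theorem isSigmaCompact_leadingSet
    (hlt : ∀ g h, g < h ↔ idx g < idx h ∨ idx g = idx h ∧ b g < b h)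
    (hcount : ∀ i : ι, (Set.Iio i).Countable)
    (hcomp : ∀ i, IsCompact (b '' (idx ⁻¹' {i}))) (i : ι) (Q : Set ℚ) :
    IsSigmaCompact (b.leadingSet (idx ⁻¹' {i}) Q) := by
  rw [leadingSet_eq_iUnion b idx hlt]
  refine isSigmaCompact_iUnion _ fun q ↦ isSigmaCompact_iUnion _ fun p ↦
    .add ?_ (.span (.union ?_ ?_))
  · exact ((hcomp i).inter_right isClosed_Ici).isSigmaCompact.image (continuous_const_smul _)
  · exact isSigmaCompact_biUnion (hcount i) fun j _ ↦ (hcomp j).isSigmaCompact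
  · exact ((hcomp i).inter_right isClosed_Iic).isSigmaCompact

end Real

end Module.Basis

/-- The positive or the negative rationals. -/
def ratHalfLine (ε : Bool) : Set ℚ := cond ε (Set.Ioi 0) (Set.Iio 0)

theorem zero_notMem_ratHalfLine (ε : Bool) : (0 : ℚ) ∉ ratHalfLine ε := by
  cases ε <;> simp [ratHalfLine]

theorem ratHalfLine_nonempty (ε : Bool) : (ratHalfLine ε).Nonempty := by
  cases ε
  · exact ⟨-1, by simp [ratHalfLine]⟩
  · exact ⟨1, by simp [ratHalfLine]⟩

theorem add_mem_ratHalfLine (ε : Bool) :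
    ∀ p ∈ ratHalfLine ε, ∀ q ∈ ratHalfLine ε, p + q ∈ ratHalfLine ε := by
  cases ε
  · exact fun p hp q hq ↦ add_neg (a := p) (b := q) hp hq
  · exact fun p hp q hq ↦ add_pos (a := p) (b := q) hp hq

theorem eq_of_ratHalfLine_inter_nonempty {ε δ : Bool}
    (h : (ratHalfLine ε ∩ ratHalfLine δ).Nonempty) : ε = δ := by
  obtain ⟨q, h1, h2⟩ := h
  cases ε <;> cases δ <;> simp_all [ratHalfLine] <;> linarith

theorem exists_mem_ratHalfLine {q : ℚ} (hq : q ≠ 0) : ∃ ε, q ∈ ratHalfLine ε :=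
  hq.lt_or_gt.elim (fun h ↦ ⟨false, h⟩) (fun h ↦ ⟨true, h⟩)

/-- The reals are partitioned by the index of the block containing the leading basis vector and
the sign of the leading coefficient, together with `{0}`. -/
theorem exists_isFsigma_partition_of_basis {ι κ : Type} [LinearOrder ι] [LinearOrder κ]
    (hι : Cardinal.mk ι = Cardinal.aleph 1) (b : Module.Basis κ ℚ ℝ) (idx : κ → ι)
    (hidx : Function.Surjective idx)
    (hlt : ∀ g h, g < h ↔ idx g < idx h ∨ idx g = idx h ∧ b g < b h)
    (hcount : ∀ i : ι, (Set.Iio i).Countable)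
    (hcomp : ∀ i, IsCompact (b '' (idx ⁻¹' {i}))) :
    ∃ (ι' : Type) (A : ι' → Set ℝ),
      Cardinal.mk ι' = Cardinal.aleph 1 ∧
      Pairwise (Function.onFun Disjoint A) ∧
      (∀ i, (A i).Nonempty) ∧
      (∀ i, IsFsigma (A i)) ∧
      (∀ i, ∀ x ∈ A i, ∀ y ∈ A i, x + y ∈ A i) ∧
      (⋃ i, A i) = Set.univ := by
  let B : ι × Bool → Set ℝ := fun p ↦ b.leadingSet (idx ⁻¹' {p.1}) (ratHalfLine p.2)
  have hB0 : ∀ p, (0 : ℝ) ∉ B p := fun p ↦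
    Module.Basis.zero_notMem_leadingSet (zero_notMem_ratHalfLine p.2)
  refine ⟨Option (ι × Bool), fun o ↦ o.elim {0} B, ?_, ?_, ?_, ?_, ?_, ?_⟩
  · have hle : Cardinal.aleph0 ≤ Cardinal.aleph 1 := Cardinal.aleph0_le_aleph 1
    rw [Cardinal.mk_option, Cardinal.mk_prod, hι, Cardinal.lift_id, Cardinal.lift_id,
      Cardinal.mk_bool, Cardinal.mul_eq_left hle (Cardinal.ofNat_lt_aleph0.le.trans hle) two_ne_zero,
      Cardinal.add_one_eq hle]
  · rintro (_ | p) (_ | p') hne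
    · exact absurd rfl hne
    · exact Set.disjoint_singleton_left.2 (hB0 p')
    · exact Set.disjoint_singleton_right.2 (hB0 p)
    · refine Set.disjoint_left.2 fun x hx hx' ↦ hne ?_
      obtain ⟨⟨h, h1, h2⟩, hQ⟩ := Module.Basis.exists_mem_inter_of_mem_leadingSet
        (zero_notMem_ratHalfLine _) (zero_notMem_ratHalfLine _) hx hx'
      exact congrArg some (Prod.ext (h1.symm.trans h2) (eq_of_ratHalfLine_inter_nonempty hQ))
  · rintro (_ | p)
    · exact Set.singleton_nonempty 0
    · exact Module.Basis.leadingSet_nonempty (hidx p.1) (ratHalfLine_nonempty p.2)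
  · rintro (_ | p)
    · exact isCompact_singleton.isSigmaCompact.isFsigma
    · exact (b.isSigmaCompact_leadingSet idx hlt hcount hcomp _ _).isFsigma
  · rintro (_ | p) x hx y hy
    · obtain rfl : x = 0 := hx
      obtain rfl : y = 0 := hy
      exact add_zero (0 : ℝ)
    · exact Module.Basis.add_mem_leadingSet (add_mem_ratHalfLine p.2) hx hy
  · refine Set.eq_univ_of_forall fun x ↦ Set.mem_iUnion.2 ?_
    by_cases hx : x = 0
    · exact ⟨none, hx⟩
    · obtain ⟨h, h0, hmax⟩ := b.exists_leading_index hx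
      obtain ⟨ε, hε⟩ := exists_mem_ratHalfLine h0
      exact ⟨some (idx h, ε), h, rfl, hε, hmax⟩

/-- A type of cardinality `ℵ₁` has a linear order with countable initial segments. -/
theorem exists_linearOrder_countable_Iio {ι : Type*}
    (hι : Cardinal.mk ι = Cardinal.aleph 1) :
    ∃ _ : LinearOrder ι, ∀ i : ι, (Set.Iio i).Countable := by
  obtain ⟨hlin, _, hord⟩ := Cardinal.exists_ord_eq_type_lt ι
  refine ⟨hlin, fun i ↦ ?_⟩
  have h := Cardinal.mk_Iio_lt i hord
  rw [hι] at h
  rwa [← Set.countable_coe_iff, ← Cardinal.mk_le_aleph0_iff, ← Order.lt_succ_iff,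
    Cardinal.succ_aleph0]

/-- If there is a Hamel basis of `ℝ` over `ℚ` which is the union of `ℵ₁` pairwise disjoint
sets each homeomorphic to the Cantor space `{0,1}^ℕ`, then `ℝ` can be partitioned into `ℵ₁`
nonempty `F_σ` sets closed under addition. -/
theorem stmt_11 (H : Set ℝ)
    (hli : LinearIndependent ℚ ((↑) : H → ℝ))
    (hspan : Submodule.span ℚ H = ⊤)
    (ι : Type) (hι : Cardinal.mk ι = Cardinal.aleph 1)
    (C : ι → Set ℝ)
    (hdisj : Pairwise (Function.onFun Disjoint C))
    (hcantor : ∀ i, Nonempty (C i ≃ₜ (ℕ → Bool)))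
    (hunion : (⋃ i, C i) = H) :
    ∃ (ι' : Type) (A : ι' → Set ℝ),
      Cardinal.mk ι' = Cardinal.aleph 1 ∧
      Pairwise (Function.onFun Disjoint A) ∧
      (∀ i, (A i).Nonempty) ∧
      (∀ i, IsFsigma (A i)) ∧
      (∀ i, ∀ x ∈ A i, ∀ y ∈ A i, x + y ∈ A i) ∧
      (⋃ i, A i) = Set.univ := by
  obtain ⟨_, hcount⟩ := exists_linearOrder_countable_Iio hι
  let κ := Σₗ i, C i
  let v : κ → ℝ := fun p ↦ (p.2 : ℝ)
  have hvinj : Function.Injective v := by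
    rintro ⟨i, x, hx⟩ ⟨j, y, hy⟩ (rfl : x = y)
    obtain rfl : i = j := by_contra fun hij ↦ Set.disjoint_left.1 (hdisj hij) hx hy
    rfl
  have hrange : Set.range v = H := by
    rw [← hunion]
    ext x
    simp only [Set.mem_range, Set.mem_iUnion]
    exact ⟨fun ⟨p, hp⟩ ↦ ⟨p.1, hp ▸ p.2.2⟩, fun ⟨i, hi⟩ ↦ ⟨⟨i, x, hi⟩, rfl⟩⟩
  have hv : LinearIndependent ℚ v := by
    rw [← linearIndepOn_id_range_iff hvinj, hrange]
    exact hli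
  let b : Module.Basis κ ℚ ℝ := .mk hv (by rw [hrange, hspan])
  have hb : ∀ p, b p = v p := Module.Basis.mk_apply hv _
  refine exists_isFsigma_partition_of_basis hι b (fun p ↦ p.1) (fun i ↦ ?_) ?_ hcount fun i ↦ ?_
  · obtain ⟨e⟩ := hcantor i
    exact ⟨⟨i, e.symm fun _ ↦ false⟩, rfl⟩
  · simp only [hb]
    rintro ⟨i, x⟩ ⟨j, y⟩
    refine Sigma.Lex.lt_def.trans (or_congr_right ⟨?_, ?_⟩)
    all_goals
      rintro ⟨h, hxy⟩
      obtain rfl : i = j := h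
      exact ⟨rfl, hxy⟩
  · have himage : b '' ((fun p : κ ↦ p.1) ⁻¹' {i}) = C i := by
      ext x
      constructor
      · rintro ⟨⟨j, y⟩, rfl, rfl⟩
        exact (hb ⟨j, y⟩).symm ▸ y.2
      · exact fun hx ↦ ⟨⟨i, x, hx⟩, rfl, hb _⟩
    rw [himage, isCompact_iff_compactSpace]
    obtain ⟨e⟩ := hcantor i
    exact e.symm.compactSpace
end

section
/- Suppose (A_i)_{i ∈ I} is a family of pairwise disjoint nonempty subsets of ℝ whose union is ℝ, and each A_i is closed under addition. If x, y are nonzero reals such that x/y is a positive rational number, then x and y belong to the same piece A_i. Consequently each A_i is a union of sets of the form c·ℚ⁺ = {c·q : q ∈ ℚ, q > 0} with c ∈ ℝ. -/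
/-- A subset of an additive monoid closed under addition is closed under positive natural
multiples. -/
theorem nsmul_mem_of_add_mem {M : Type*} [AddMonoid M] {S : Set M}
    (hS : ∀ x ∈ S, ∀ y ∈ S, x + y ∈ S) {x : M} (hx : x ∈ S) {n : ℕ} (hn : 0 < n) :
    n • x ∈ S := by
  induction n, hn using Nat.le_induction with
  | base => simpa using hx
  | succ k _ ih => rw [succ_nsmul]; exact hS _ ih _ hx

/-- Two sets closed under addition meet as soon as one contains a positive rational multiple of
an element of the other. -/
theorem not_disjoint_of_pos_rat_mul {S T : Set ℝ}
    (hS : ∀ x ∈ S, ∀ y ∈ S, x + y ∈ S) (hT : ∀ x ∈ T, ∀ y ∈ T, x + y ∈ T)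
    {y : ℝ} {q : ℚ} (hq : 0 < q) (hx : (q : ℝ) * y ∈ S) (hy : y ∈ T) : ¬ Disjoint S T := by
  have hnum : 0 < q.num.toNat := by
    have := Rat.num_pos.mpr hq
    omega
  have hcast : ((q.num.toNat : ℕ) : ℝ) = q * q.den := by
    have h : ((q.num.toNat : ℕ) : ℤ) = q.num := Int.toNat_of_nonneg (Rat.num_pos.mpr hq).le
    have h' : (q.num : ℚ) = q * q.den := (Rat.mul_den_eq_num q).symm
    rw [← h] at h'
    exact_mod_cast h'
  have heq : q.den • ((q : ℝ) * y) = q.num.toNat • y := by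
    rw [nsmul_eq_mul, nsmul_eq_mul, hcast]
    ring
  refine Set.not_disjoint_iff.mpr ⟨_, nsmul_mem_of_add_mem hS hx q.den_pos, ?_⟩
  rw [heq]
  exact nsmul_mem_of_add_mem hT hy hnum

/-- If `ℝ` is partitioned into nonempty sets closed under addition, then any two nonzero reals
whose ratio is a positive rational lie in the same piece; consequently each piece is a union
of sets of the form `c · ℚ⁺`. -/
theorem stmt_12 {ι : Type*} (A : ι → Set ℝ)
    (hne : ∀ i, (A i).Nonempty)
    (hdisj : Pairwise (Function.onFun Disjoint A))
    (hcover : (⋃ i, A i) = Set.univ)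
    (hadd : ∀ i, ∀ x ∈ A i, ∀ y ∈ A i, x + y ∈ A i) :
    (∀ x y : ℝ, x ≠ 0 → y ≠ 0 → (∃ q : ℚ, 0 < q ∧ x = (q : ℝ) * y) →
      ∀ i j, x ∈ A i → y ∈ A j → i = j) ∧
    (∀ i, ∃ C : Set ℝ, A i = ⋃ c ∈ C, {x : ℝ | ∃ q : ℚ, 0 < q ∧ x = c * (q : ℝ)}) := by
  have same : ∀ (y : ℝ) (q : ℚ), 0 < q → ∀ i j, (q : ℝ) * y ∈ A i → y ∈ A j → i = j := by
    intro y q hq i j hx hy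
    by_contra hij
    exact not_disjoint_of_pos_rat_mul (hadd i) (hadd j) hq hx hy (hdisj hij)
  refine ⟨?_, fun i => ⟨A i, ?_⟩⟩
  · rintro x y - - ⟨q, hq, rfl⟩ i j hx hy
    exact same y q hq i j hx hy
  · ext x
    simp only [Set.mem_iUnion, Set.mem_ofPred_eq, exists_prop]
    constructor
    · intro hx
      exact ⟨x, hx, 1, one_pos, by simp⟩
    · rintro ⟨c, hc, q, hq, rfl⟩
      obtain ⟨j, hj⟩ := Set.iUnion_eq_univ_iff.mp hcover (c * q)
      rwa [← same c q hq j i (by rwa [mul_comm]) hc]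
end

section
/- Suppose (A_i)_{i ∈ I} is a family of pairwise disjoint nonempty subsets of ℝ whose union is ℝ, each A_i is closed under addition, and each A_i is a G_δ set. Then each A_i is the union of some subfamily of the three sets (-∞, 0), {0}, (0, ∞); consequently the cardinality of I is at most 3. -/
/-- A set containing all positive rational multiples of some `x > 0` is dense in `(0, ∞)`. -/
lemma dense_union_Iic_zero_of_rat_smul_mem {s : Set ℝ} {x : ℝ} (hx : 0 < x)
    (hs : ∀ q : ℚ, 0 < q → (q : ℝ) * x ∈ s) : Dense (s ∪ Set.Iic 0) := by
  refine dense_of_exists_between fun a b hab => ?_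
  rcases lt_or_ge a 0 with ha | ha
  · obtain ⟨c, hac, hc⟩ := exists_between (lt_min hab ha)
    exact ⟨c, Or.inr (hc.le.trans (min_le_right _ _)), hac, hc.trans_le (min_le_left _ _)⟩
  · obtain ⟨q, haq, hqb⟩ := exists_rat_btwn (div_lt_div_of_pos_right hab hx)
    have hq : (0 : ℝ) < q := (div_nonneg ha hx.le).trans_lt haq
    exact ⟨q * x, Or.inl (hs q (by exact_mod_cast hq)), (div_lt_iff₀ hx).1 haq,
      (lt_div_iff₀ hx).1 hqb⟩

/-- Two `G_δ` sets containing all positive rational multiples of positive reals `x` and `y`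
respectively meet. -/
lemma IsGδ.inter_nonempty_of_rat_smul_mem {s t : Set ℝ} (hsδ : IsGδ s) (htδ : IsGδ t)
    {x y : ℝ} (hx : 0 < x) (hy : 0 < y) (hs : ∀ q : ℚ, 0 < q → (q : ℝ) * x ∈ s)
    (ht : ∀ q : ℚ, 0 < q → (q : ℝ) * y ∈ t) : (s ∩ t).Nonempty := by
  have hd : Dense ((s ∪ Set.Iic 0) ∩ (t ∪ Set.Iic 0)) :=
    Dense.inter_of_Gδ (hsδ.union isClosed_Iic.isGδ) (htδ.union isClosed_Iic.isGδ)
      (dense_union_Iic_zero_of_rat_smul_mem hx hs) (dense_union_Iic_zero_of_rat_smul_mem hy ht)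
  obtain ⟨z, ⟨hzs, hzt⟩, hz, -⟩ := hd.exists_between (zero_lt_one' ℝ)
  exact ⟨z, hzs.resolve_right (not_le.2 hz), hzt.resolve_right (not_le.2 hz)⟩

/-- The pieces of a partition of `ℝ` into sets closed under addition are closed under
multiplication by positive rationals. -/
lemma rat_smul_mem_of_partition {ι : Type*} {A : ι → Set ℝ}
    (hdisj : Pairwise (Function.onFun Disjoint A)) (hcover : (⋃ i, A i) = Set.univ)
    (hadd : ∀ i, ∀ x ∈ A i, ∀ y ∈ A i, x + y ∈ A i) {i : ι} {x : ℝ} (hx : x ∈ A i)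
    {q : ℚ} (hq : 0 < q) : (q : ℝ) * x ∈ A i := by
  have nat_mul : ∀ j, ∀ y ∈ A j, ∀ n : ℕ, 0 < n → (n : ℝ) * y ∈ A j := by
    intro j y hy n hn
    induction n, hn using Nat.le_induction with
    | base => simpa using hy
    | succ n _ ih =>
      rw [Nat.cast_succ, add_one_mul]
      exact hadd j _ ih _ hy
  obtain ⟨j, hj⟩ := Set.mem_iUnion.1 (hcover.symm ▸ Set.mem_univ ((q : ℝ) * x))
  have hnum : 0 < q.num.toNat := by have := Rat.num_pos.2 hq; omega
  have heq : (q.den : ℝ) * (q * x) = (q.num.toNat : ℝ) * x := by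
    have h₁ : ((q.num.toNat : ℤ) : ℝ) = (q.num : ℝ) := by
      rw [Int.toNat_of_nonneg (Rat.num_pos.2 hq).le]
    have h₂ : (q : ℝ) * q.den = q.num := by exact_mod_cast Rat.mul_den_eq_num q
    rw [Int.cast_natCast] at h₁
    rw [h₁, ← h₂]
    ring
  have hij : i = j := hdisj.eq (Set.not_disjoint_iff.2
    ⟨_, nat_mul i x hx _ hnum, heq ▸ nat_mul j _ hj _ q.den_pos⟩)
  exact hij ▸ hj

/-- In a partition of `ℝ` into `G_δ` sets closed under addition, reals of the same sign lie in
the same piece. -/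
lemma eq_of_sign_eq_of_partition {ι : Type*} {A : ι → Set ℝ}
    (hdisj : Pairwise (Function.onFun Disjoint A)) (hcover : (⋃ i, A i) = Set.univ)
    (hadd : ∀ i, ∀ x ∈ A i, ∀ y ∈ A i, x + y ∈ A i) (hGdelta : ∀ i, IsGδ (A i))
    {i j : ι} {x y : ℝ} (hx : x ∈ A i) (hy : y ∈ A j) (hxy : SignType.sign x = SignType.sign y) :
    i = j := by
  have hsmul {k : ι} {z : ℝ} (hz : z ∈ A k) (q : ℚ) (hq : 0 < q) : (q : ℝ) * z ∈ A k :=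
    rat_smul_mem_of_partition hdisj hcover hadd hz hq
  refine hdisj.eq (Set.not_disjoint_iff_nonempty_inter.2 ?_)
  rcases lt_trichotomy x 0 with h | h | h
  · have hy0 : y < 0 := sign_eq_neg_one_iff.1 (hxy ▸ sign_neg h)
    obtain ⟨z, hz⟩ := IsGδ.inter_nonempty_of_rat_smul_mem
      ((hGdelta i).preimage continuous_neg) ((hGdelta j).preimage continuous_neg)
      (neg_pos.2 h) (neg_pos.2 hy0)
      (fun q hq => by simpa using hsmul hx q hq) (fun q hq => by simpa using hsmul hy q hq)
    exact ⟨-z, hz⟩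
  · have hy0 : y = 0 := sign_eq_zero_iff.1 (by rw [← hxy, h, sign_zero])
    exact ⟨0, h ▸ hx, hy0 ▸ hy⟩
  · have hy0 : 0 < y := sign_eq_one_iff.1 (hxy ▸ sign_pos h)
    exact IsGδ.inter_nonempty_of_rat_smul_mem (hGdelta i) (hGdelta j) h hy0 (hsmul hx) (hsmul hy)


/-- If `ℝ` is partitioned into nonempty `G_δ` sets closed under addition, then each piece is
the union of some subfamily of `(-∞,0)`, `{0}`, `(0,∞)`; consequently there are at most
three pieces. -/
theorem stmt_13 {ι : Type*} (A : ι → Set ℝ)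
    (hne : ∀ i, (A i).Nonempty)
    (hdisj : Pairwise (Function.onFun Disjoint A))
    (hcover : (⋃ i, A i) = Set.univ)
    (hadd : ∀ i, ∀ x ∈ A i, ∀ y ∈ A i, x + y ∈ A i)
    (hGdelta : ∀ i, IsGδ (A i)) :
    (∀ i, ∃ S : Set (Set ℝ),
        S ⊆ {Set.Iio (0 : ℝ), {(0 : ℝ)}, Set.Ioi (0 : ℝ)} ∧ A i = ⋃₀ S) ∧
    Cardinal.mk ι ≤ 3 := by
  have key {i j : ι} {x y : ℝ} (hx : x ∈ A i) (hy : y ∈ A j)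
      (hxy : SignType.sign x = SignType.sign y) : i = j :=
    eq_of_sign_eq_of_partition hdisj hcover hadd hGdelta hx hy hxy
  have mem_of_sign_eq {i : ι} {x y : ℝ} (hx : x ∈ A i)
      (hxy : SignType.sign x = SignType.sign y) : y ∈ A i := by
    obtain ⟨j, hj⟩ := Set.mem_iUnion.1 (hcover.symm ▸ Set.mem_univ y)
    exact key hx hj hxy ▸ hj
  refine ⟨fun i => ⟨{T ∈ {Set.Iio (0 : ℝ), {(0 : ℝ)}, Set.Ioi (0 : ℝ)} | T ⊆ A i},
    Set.sep_subset _ _, ?_⟩, ?_⟩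
  · refine Set.Subset.antisymm (fun x hx => ?_) (Set.sUnion_subset fun T hT => hT.2)
    rcases lt_trichotomy x 0 with h | h | h
    · exact ⟨Set.Iio 0, ⟨by simp, fun y hy => mem_of_sign_eq hx
        ((sign_neg h).trans (sign_neg hy).symm)⟩, h⟩
    · exact ⟨{0}, ⟨by simp, Set.singleton_subset_iff.2 (h ▸ hx)⟩, h⟩
    · exact ⟨Set.Ioi 0, ⟨by simp, fun y hy => mem_of_sign_eq hx
        ((sign_pos h).trans (sign_pos hy).symm)⟩, h⟩
  · choose a ha using hne
    have hinj : Function.Injective fun i => SignType.sign (a i) :=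
      fun i j hij => key (ha i) (ha j) hij
    have hcard : Fintype.card SignType = 3 := rfl
    simpa [hcard] using Cardinal.lift_mk_le_lift_mk_of_injective hinj
end

section
/- Let B ⊆ ℝ be a Borel set and let (x_i)_{i ∈ I} be real numbers such that the translates B + x_i are pairwise disjoint and their union is ℝ. Then the cardinality of I is at most ℵ₀, or it is at least cov(𝒩). In particular, if B has positive Lebesgue measure then I is countable, and if B has Lebesgue measure zero then the cardinality of I is at least cov(𝒩). -/
/-- `cov(𝒩)`: the least cardinality of a family of Lebesgue null subsets of `ℝ` covering `ℝ`. -/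
noncomputable def covNull : Cardinal :=
  sInf { c : Cardinal | ∃ S : Set (Set ℝ), Cardinal.mk S = c ∧
    (∀ A ∈ S, MeasureTheory.volume A = 0) ∧ ⋃₀ S = Set.univ }

/-- If `ℝ` is partitioned into pairwise disjoint translates `B + x i` of a Borel set `B`, then
the number of translates is at most `ℵ₀` or at least `cov(𝒩)`; in particular, if `B` has
positive measure there are countably many translates, and if `B` is null there are at least
`cov(𝒩)` many. -/
theorem stmt_16 (B : Set ℝ) (hB : MeasurableSet B) {ι : Type} (x : ι → ℝ)
    (hdisj : Pairwise (Function.onFun Disjoint (fun i => (fun b => b + x i) '' B)))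
    (hcover : (⋃ i, (fun b => b + x i) '' B) = Set.univ) :
    (Cardinal.mk ι ≤ Cardinal.aleph0 ∨ covNull ≤ Cardinal.mk ι) ∧
    (0 < MeasureTheory.volume B → Cardinal.mk ι ≤ Cardinal.aleph0) ∧
    (MeasureTheory.volume B = 0 → covNull ≤ Cardinal.mk ι) := by
  have hvol : ∀ i, MeasureTheory.volume ((fun b => b + x i) '' B) = MeasureTheory.volume B :=
    fun i => by rw [Set.image_add_right, MeasureTheory.measure_preimage_add_right]
  have hmeas : ∀ i, MeasurableSet ((fun b => b + x i) '' B) := fun i => by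
    rw [Set.image_add_right]
    exact measurable_add_const (-x i) hB
  have hpos : 0 < MeasureTheory.volume B → Cardinal.mk ι ≤ Cardinal.aleph0 := fun h => by
    have hc := MeasureTheory.Measure.countable_meas_pos_of_disjoint_iUnion
      (μ := MeasureTheory.volume) hmeas hdisj
    simp only [hvol, h, Set.ofPred_true] at hc
    exact Cardinal.mk_le_aleph0_iff.2 (Set.countable_univ_iff.1 hc)
  have hnull : MeasureTheory.volume B = 0 → covNull ≤ Cardinal.mk ι := fun h => by
    refine le_trans (csInf_le' ?_)
      (Cardinal.mk_range_le (f := fun i => (fun b => b + x i) '' B))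
    refine ⟨Set.range fun i => (fun b => b + x i) '' B, rfl, ?_, ?_⟩
    · rintro _ ⟨i, rfl⟩
      exact (hvol i).trans h
    · rw [Set.sUnion_range, hcover]
  exact ⟨(eq_zero_or_pos (MeasureTheory.volume B)).symm.imp hpos hnull, hpos, hnull⟩
end

section
/- Let B ⊆ ℝ be a σ-compact (equivalently, F_σ) set and let (x_i)_{i ∈ I} be real numbers such that the translates B + x_i are pairwise disjoint, their union is ℝ, and the cardinality of I is uncountable. Then the cardinality of I equals 2^ℵ₀. -/
open Set Filter Topology Metric

/-- An uncountable subset of a second countable space contains a nonempty subset which is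
dense in itself. -/
theorem Set.exists_subset_forall_accPt_of_not_countable {α : Type*} [TopologicalSpace α]
    [SecondCountableTopology α] {X : Set α} (hX : ¬ X.Countable) :
    ∃ S ⊆ X, S.Nonempty ∧ ∀ a ∈ S, ∀ U ∈ 𝓝 a, ∃ b ∈ S, b ∈ U ∧ b ≠ a := by
  let 𝒩 : Set (Set α) := {V ∈ TopologicalSpace.countableBasis α | (V ∩ X).Countable}
  let N : Set α := ⋃ V ∈ 𝒩, V ∩ X
  have hN : N.Countable :=
    Set.Countable.biUnion ((TopologicalSpace.countable_countableBasis α).mono fun _ h => h.1)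
      fun V hV => hV.2
  refine ⟨X \ N, sdiff_subset, ?_, ?_⟩
  · by_contra h
    exact hX (hN.mono (sdiff_eq_empty.1 (not_nonempty_iff_eq_empty.1 h)))
  · intro a ha U hU
    obtain ⟨V, hV, haV, hVU⟩ :=
      (TopologicalSpace.isBasis_countableBasis α).mem_nhds_iff.1 hU
    by_contra! h
    refine ha.2 (mem_biUnion (⟨hV, ?_⟩ : V ∈ 𝒩) ⟨haV, ha.1⟩)
    refine (hN.union (countable_singleton a)).mono fun b hb => ?_
    by_cases hbN : b ∈ N
    · exact Or.inl hbN
    · exact Or.inr (h b ⟨hb.2, hbN⟩ (hVU hb.1))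

/-- The finite stages of the Kuratowski–Mycielski construction: points of `S` indexed by binary
words of length `n`, with a common radius such that points of balls around distinct centres are
not related by `R`. -/
structure MycielskiStage {α : Type*} [MetricSpace α] (S : Set α) (R : Set (α × α)) (n : ℕ) where
  center : (Fin n → Bool) → α
  radius : ℝ
  center_mem : ∀ s, center s ∈ S
  radius_pos : 0 < radius
  separated : ∀ s t, s ≠ t → ∀ u ∈ closedBall (center s) radius,
    ∀ v ∈ closedBall (center t) radius, (u, v) ∉ R

/-- Finitely many points that are pairwise not related by a closed relation have balls of a common
arbitrarily small radius that are pairwise unrelated. -/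
theorem exists_radius_forall_notMem {α ι : Type*} [MetricSpace α] [Finite ι] {R : Set (α × α)}
    (hR : IsClosed R) (c : ι → α) (hc : ∀ s t, s ≠ t → (c s, c t) ∉ R) {δ : ℝ} (hδ : 0 < δ) :
    ∃ ε, 0 < ε ∧ ε ≤ δ ∧ ∀ s t, s ≠ t → ∀ u ∈ closedBall (c s) ε,
      ∀ v ∈ closedBall (c t) ε, (u, v) ∉ R := by
  have key : ∀ s t, ∀ᶠ ε in 𝓝[>] (0 : ℝ), s ≠ t → ∀ u ∈ closedBall (c s) ε,
      ∀ v ∈ closedBall (c t) ε, (u, v) ∉ R := by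
    intro s t
    by_cases hst : s = t
    · exact Eventually.of_forall fun _ h => absurd hst h
    obtain ⟨ε, hε, hsub⟩ := nhds_basis_closedBall.mem_iff.1 (hR.isOpen_compl.mem_nhds (hc s t hst))
    filter_upwards [Ioc_mem_nhdsGT hε] with ε' hε' _ u hu v hv
    refine hsub ?_
    rw [← closedBall_prod_same]
    exact ⟨closedBall_subset_closedBall hε'.2 hu, closedBall_subset_closedBall hε'.2 hv⟩
  obtain ⟨ε, hε, hεδ⟩ :=
    ((eventually_all.2 fun s => eventually_all.2 (key s)).and (Ioc_mem_nhdsGT hδ)).exists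
  exact ⟨ε, hεδ.1, hεδ.2, hε⟩

theorem MycielskiStage.exists_succ {α : Type*} [MetricSpace α] {S : Set α}
    (hS : ∀ a ∈ S, ∀ U ∈ 𝓝 a, ∃ b ∈ S, b ∈ U ∧ b ≠ a) {R R' : Set (α × α)}
    (hdiag : ∀ a, (a, a) ∈ R) (hR' : IsClosed R')
    (hSR' : ∀ a ∈ S, ∀ b ∈ S, a ≠ b → (a, b) ∉ R') {n : ℕ} (σ : MycielskiStage S R n) :
    ∃ τ : MycielskiStage S R' (n + 1), τ.radius ≤ σ.radius / 2 ∧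
      ∀ t, dist (σ.center (Fin.init t)) (τ.center t) + τ.radius ≤ σ.radius := by
  have hr := σ.radius_pos
  choose d hdS hdball hdne using fun s =>
    hS (σ.center s) (σ.center_mem s) _ (closedBall_mem_nhds _ (half_pos hr))
  let c : (Fin (n + 1) → Bool) → α := fun t =>
    if t (Fin.last n) then d (Fin.init t) else σ.center (Fin.init t)
  have hcS : ∀ t, c t ∈ S := fun t => by
    dsimp only [c]; split_ifs
    exacts [hdS _, σ.center_mem _]
  have hcdist : ∀ t, dist (σ.center (Fin.init t)) (c t) ≤ σ.radius / 2 := fun t => by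
    dsimp only [c]; split_ifs
    · rw [dist_comm]; exact hdball _
    · rw [dist_self]; exact (half_pos hr).le
  have hcball : ∀ t, c t ∈ closedBall (σ.center (Fin.init t)) σ.radius := fun t => by
    rw [mem_closedBall, dist_comm]; linarith [hcdist t]
  have hcinj : ∀ s t, s ≠ t → c s ≠ c t := by
    intro s t hst heq
    by_cases hinit : Fin.init s = Fin.init t
    · have hlast : s (Fin.last n) ≠ t (Fin.last n) := fun h => hst <| by
        rw [← Fin.snoc_init_self s, ← Fin.snoc_init_self t, hinit, h]
      dsimp only [c] at heq
      rw [hinit] at heq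
      rcases hs : s (Fin.last n) <;> rcases ht : t (Fin.last n) <;> simp_all
      · exact hdne _ heq.symm
    · refine σ.separated _ _ hinit _ (hcball s) _ (hcball t) ?_
      rw [heq]; exact hdiag _
  obtain ⟨ε, hε, hεσ, hsep⟩ := exists_radius_forall_notMem hR' c
    (fun s t hst => hSR' _ (hcS s) _ (hcS t) (hcinj s t hst)) (half_pos hr)
  exact ⟨⟨c, ε, hcS, hε, hsep⟩, hεσ, fun t => by
    change dist _ (c t) + ε ≤ _; linarith [hcdist t]⟩

/-- A form of the Kuratowski–Mycielski theorem: if a nonempty dense-in-itself set `S` in a complete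
metric space is free for an increasing sequence of closed relations, then there is a Cantor
family of points that is free for all of them. -/
theorem exists_cantor_family_free {α : Type*} [MetricSpace α] [CompleteSpace α] {S : Set α}
    (hne : S.Nonempty) (hS : ∀ a ∈ S, ∀ U ∈ 𝓝 a, ∃ b ∈ S, b ∈ U ∧ b ≠ a)
    {R : ℕ → Set (α × α)} (hmono : Monotone R) (hclosed : ∀ n, IsClosed (R n))
    (hdiag : ∀ n a, (a, a) ∈ R n) (hSR : ∀ n, ∀ a ∈ S, ∀ b ∈ S, a ≠ b → (a, b) ∉ R n) :
    ∃ q : (ℕ → Bool) → α, ∀ f g, f ≠ g → ∀ n, (q f, q g) ∉ R n := by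
  obtain ⟨a, ha⟩ := hne
  choose next hnext_radius hnext_dist using fun n (σ : MycielskiStage S (R n) n) =>
    σ.exists_succ hS (hdiag n) (hclosed (n + 1)) (hSR (n + 1))
  let σ : ∀ n, MycielskiStage S (R n) n := fun n => Nat.rec
    ⟨fun _ => a, 1, fun _ => ha, one_pos, fun s t h => absurd (Subsingleton.elim s t) h⟩ next n
  have hradius : ∀ n, (σ n).radius ≤ (1 / 2) ^ n := by
    intro n
    induction n with
    | zero => simp [σ]
    | succ n ih =>
      have h : (σ (n + 1)).radius ≤ (σ n).radius / 2 := hnext_radius n (σ n)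
      rw [pow_succ]; linarith
  have hlim : Tendsto (fun n => (σ n).radius) atTop (𝓝 0) :=
    squeeze_zero (fun n => (σ n).radius_pos.le) hradius
      (tendsto_pow_atTop_nhds_zero_of_lt_one (by norm_num) (by norm_num))
  let u : (ℕ → Bool) → ℕ → α := fun f n => (σ n).center fun i => f i
  have hstep : ∀ f n, dist (u f n) (u f (n + 1)) + (σ (n + 1)).radius ≤ (σ n).radius :=
    fun f n => hnext_dist n (σ n) fun i => f i
  have hdist : ∀ f n m, n ≤ m → dist (u f n) (u f m) + (σ m).radius ≤ (σ n).radius := by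
    intro f n m hnm
    induction m, hnm using Nat.le_induction with
    | base => simp
    | succ m _ ih => linarith [hstep f m, dist_triangle (u f n) (u f m) (u f (m + 1))]
  have hdist' : ∀ f n m, n ≤ m → dist (u f n) (u f m) ≤ (σ n).radius := fun f n m hnm => by
    linarith [hdist f n m hnm, (σ m).radius_pos]
  choose q hq using fun f =>
    cauchySeq_tendsto_of_complete (cauchySeq_of_le_tendsto_0' _ (hdist' f) hlim)
  have hqball : ∀ f n, q f ∈ closedBall (u f n) (σ n).radius := fun f n =>
    isClosed_closedBall.mem_of_tendsto (hq f) <| (eventually_ge_atTop n).mono fun m hm => by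
      rw [mem_closedBall, dist_comm]; exact hdist' f n m hm
  refine ⟨q, fun f g hfg n hmem => ?_⟩
  obtain ⟨k, hk⟩ := Function.ne_iff.1 hfg
  let m := max n (k + 1)
  refine (σ m).separated (fun i => f i) (fun i => g i) (fun h => hk ?_) _ (hqball f m) _
    (hqball g m) (hmono (le_max_left n (k + 1)) hmem)
  exact congrFun h ⟨k, lt_of_lt_of_le k.lt_succ_self (le_max_right n (k + 1))⟩

/-- If `ℝ` is partitioned into uncountably many pairwise disjoint translates `B + x i` of a
σ-compact set `B`, then the number of translates is exactly `2^ℵ₀`. -/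
theorem stmt_17 (B : Set ℝ) (hB : IsSigmaCompact B) {ι : Type} (x : ι → ℝ)
    (hdisj : Pairwise (Function.onFun Disjoint (fun i => (fun b => b + x i) '' B)))
    (hcover : (⋃ i, (fun b => b + x i) '' B) = Set.univ)
    (huncount : Cardinal.aleph0 < Cardinal.mk ι) :
    Cardinal.mk ι = Cardinal.continuum := by
  have hdisj' : ∀ i j, ∀ b ∈ B, ∀ b' ∈ B, b + x i = b' + x j → i = j := by
    intro i j b hb b' hb' h
    by_contra hij
    exact Set.disjoint_left.1 (hdisj hij) ⟨b, hb, rfl⟩ ⟨b', hb', h.symm⟩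
  have hcover' : ∀ y, ∃ i, ∃ b ∈ B, b + x i = y := fun y => by
    have h : y ∈ ⋃ i, (fun b => b + x i) '' B := by rw [hcover]; trivial
    exact mem_iUnion.1 h
  obtain ⟨-, b₀, hb₀, -⟩ := hcover' 0
  have hinj : Function.Injective x := fun i j h => hdisj' i j b₀ hb₀ b₀ hb₀ (by rw [h])
  have hX : ¬ (range x).Countable := fun h => by
    rw [← Cardinal.le_aleph0_iff_set_countable, Cardinal.mk_range_eq x hinj] at h
    exact huncount.not_ge h
  obtain ⟨S, hSX, hne, hS⟩ := Set.exists_subset_forall_accPt_of_not_countable hX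
  obtain ⟨K, hK, rfl⟩ := hB
  let L : ℕ → Set ℝ := Set.accumulate K
  have hLmono : Monotone L := Set.monotone_accumulate
  have hLB : ∀ n, L n ⊆ ⋃ k, K k := fun n => Set.accumulate_subset_iUnion n
  let R : ℕ → Set (ℝ × ℝ) := fun n =>
    (fun p : ℝ × ℝ => p.1 - p.2) ⁻¹' ((fun p : ℝ × ℝ => p.1 - p.2) '' L n ×ˢ L n ∪ {0})
  have hRmono : Monotone R := fun m n hmn => preimage_mono <|
    union_subset_union_left _ <| image_mono <| prod_mono (hLmono hmn) (hLmono hmn)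
  have hRclosed : ∀ n, IsClosed (R n) := fun n => by
    have hL : IsCompact (L n) := isCompact_accumulate hK n
    exact (((hL.prod hL).image continuous_sub).isClosed.union isClosed_singleton).preimage
      continuous_sub
  have hSR : ∀ n, ∀ a ∈ S, ∀ b ∈ S, a ≠ b → (a, b) ∉ R n := by
    intro n a ha b hb hab hmem
    obtain ⟨i, rfl⟩ := hSX ha
    obtain ⟨j, rfl⟩ := hSX hb
    rcases hmem with ⟨⟨k, k'⟩, ⟨hk, hk'⟩, h⟩ | h
    · refine hab (congrArg x (hdisj' i j k' (hLB n hk') k (hLB n hk) ?_))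
      dsimp only at h
      linarith
    · exact hab (sub_eq_zero.1 h)
  obtain ⟨q, hq⟩ := exists_cantor_family_free hne hS hRmono hRclosed
    (fun n a => Or.inr (sub_self a)) hSR
  choose idx b hb hbq using fun f => hcover' (q f)
  have hidx : Function.Injective idx := by
    intro f g hfg
    by_contra hne
    obtain ⟨m, hm⟩ := mem_iUnion.1 (hb f)
    obtain ⟨n, hn⟩ := mem_iUnion.1 (hb g)
    refine hq f g hne (max m n) (Or.inl ⟨(b f, b g), ⟨?_, ?_⟩, ?_⟩)
    · exact hLmono (le_max_left m n) (Set.subset_accumulate hm)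
    · exact hLmono (le_max_right m n) (Set.subset_accumulate hn)
    · simp only [← hbq, hfg]
      ring
  apply le_antisymm
  · simpa [Cardinal.mk_real] using Cardinal.mk_le_of_injective hinj
  · simpa using Cardinal.mk_le_of_injective hidx
end

section
/- Suppose (H_i)_{i ∈ I} is a family of additive subgroups of ℝ whose union is ℝ and such that H_i ∩ H_j = {0} for all distinct i, j ∈ I. Then each H_i is a ℚ-linear subspace of ℝ, i.e., each H_i is closed under multiplication by rational numbers. -/
/-- If `ℝ` is the union of a family of additive subgroups any two distinct of which intersect
exactly in `{0}`, then each of these subgroups is a `ℚ`-linear subspace of `ℝ`, i.e. closed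
under multiplication by rational numbers. -/
theorem stmt_19 {ι : Type*} (H : ι → AddSubgroup ℝ)
    (hcover : ∀ x : ℝ, ∃ i, x ∈ H i)
    (hdisj : ∀ i j, i ≠ j → H i ⊓ H j = (⊥ : AddSubgroup ℝ)) :
    ∀ i, ∀ q : ℚ, ∀ x ∈ H i, (q : ℝ) * x ∈ H i := by
  intro i q x hx
  obtain ⟨j, hj⟩ := hcover (q * x)
  by_cases hij : i = j
  · exact hij ▸ hj
  have hden : (q.den : ℝ) ≠ 0 := Nat.cast_ne_zero.mpr q.den_ne_zero
  have hmul : (q.den : ℝ) * (q * x) = q.num * x := by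
    rw [← mul_assoc]
    congr 1
    exact_mod_cast q.den_mul_eq_num
  have hi : (q.den : ℝ) * (q * x) ∈ H i := by
    rw [hmul, ← zsmul_eq_mul]
    exact (H i).zsmul_mem hx _
  have hj' : (q.den : ℝ) * (q * x) ∈ H j := by
    rw [← nsmul_eq_mul]
    exact (H j).nsmul_mem hj _
  have hbot : (q.den : ℝ) * (q * x) ∈ (⊥ : AddSubgroup ℝ) := hdisj i j hij ▸ ⟨hi, hj'⟩
  have hzero : (q : ℝ) * x = 0 :=
    (mul_eq_zero.mp (AddSubgroup.mem_bot.mp hbot)).resolve_left hden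
  exact hzero ▸ (H i).zero_mem
end
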